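/- Let a < b be real numbers and 0 < α < 1. If f and g are absolutely continuous on [a,b], then ∫_a^b g(x)·(C_xD_b^α f)(x) dx = −[f(x)·(aI_x^{1−α} g)(x)]_{x=a}^{x=b} + ∫_a^b f(x)·(aD_x^α g)(x) dx, where the left Riemann–Liouville fractional derivative aD_x^α g exists almost everywhere and the boundary term denotes the difference of the values at x = b and x = a. -/

import Mathlib

/-!
By Dirichlet's formula, the left integral `ₐI^{1-α}` is adjoint to the right integral `I_b^{1-α}`.
Since `ᶜD_b^α f = -I_b^{1-α} f'`, it follows that `∫ g · ᶜD_b^α f = -∫ f' · ₐI^{1-α} g`, and it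
remains to integrate by parts in the ordinary sense. This is legitimate because `ₐI^{1-α} g` is
absolutely continuous: convolution with the kernel commutes with taking primitives, so writing
`g = g(a) + ∫ g'` exhibits `ₐI^{1-α} g` as the primitive of an integrable function.
-/

open MeasureTheory Set Real

noncomputable section

/-- Left Riemann–Liouville fractional integral `(ₐIₓ^α f)(x)`. -/
def leftRLI (a α : ℝ) (f : ℝ → ℝ) (x : ℝ) : ℝ :=
  (1 / Real.Gamma α) * ∫ t in a..x, (x - t) ^ (α - 1) * f t

/-- Right Riemann–Liouville fractional integral `(ₓI_b^α f)(x)`. -/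
def rightRLI (b α : ℝ) (f : ℝ → ℝ) (x : ℝ) : ℝ :=
  (1 / Real.Gamma α) * ∫ t in x..b, (t - x) ^ (α - 1) * f t

/-- A function is absolutely continuous on `[a, b]` iff it is the integral of its
(almost everywhere defined) derivative. -/
def AbsolutelyContinuousOn (f : ℝ → ℝ) (a b : ℝ) : Prop :=
  IntervalIntegrable (deriv f) volume a b ∧
    ∀ x ∈ Icc a b, f x = f a + ∫ t in a..x, deriv f t

/-- Left Caputo fractional derivative `(ᶜₐDₓ^α f)(x)`. -/
def caputoLeft (a α : ℝ) (f : ℝ → ℝ) (x : ℝ) : ℝ :=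
  (1 / Real.Gamma (1 - α)) * ∫ t in a..x, (x - t) ^ (-α) * deriv f t

/-- Right Caputo fractional derivative `(ᶜₓD_b^α f)(x)`. -/
def caputoRight (b α : ℝ) (f : ℝ → ℝ) (x : ℝ) : ℝ :=
  -(1 / Real.Gamma (1 - α)) * ∫ t in x..b, (t - x) ^ (-α) * deriv f t

/-- Left Riemann–Liouville fractional derivative `(ₐDₓ^α g)(x) = d/dx (ₐIₓ^{1-α} g)(x)`. -/
def rlLeftD (a α : ℝ) (g : ℝ → ℝ) (x : ℝ) : ℝ :=
  deriv (leftRLI a (1 - α) g) x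

/-- Right Riemann–Liouville fractional derivative `(ₓD_b^α g)(x) = -d/dx (ₓI_b^{1-α} g)(x)`. -/
def rlRightD (b α : ℝ) (g : ℝ → ℝ) (x : ℝ) : ℝ :=
  -deriv (rightRLI b (1 - α) g) x

/-- Combined Caputo fractional derivative `ᶜD_γ^{α,β} f = γ ᶜₐDₓ^α f + (1-γ) ᶜₓD_b^β f`. -/
def combCaputo (a b α β γ : ℝ) (f : ℝ → ℝ) (x : ℝ) : ℝ :=
  γ * caputoLeft a α f x + (1 - γ) * caputoRight b β f x

/-- Combined Riemann–Liouville derivative `D_{1-γ}^{β,α} g = (1-γ) ₐDₓ^β g + γ ₓD_b^α g`. -/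
def combRL (a b α β γ : ℝ) (g : ℝ → ℝ) (x : ℝ) : ℝ :=
  (1 - γ) * rlLeftD a β g x + γ * rlRightD b α g x

/-- Componentwise combined Caputo derivative of a vector-valued function. -/
def combCaputoVec (a b α β γ : ℝ) {N : ℕ} (y : ℝ → Fin N → ℝ) (x : ℝ) : Fin N → ℝ :=
  fun i => combCaputo a b α β γ (fun t => y t i) x

/-- The class `𝐃` of trajectories: each component absolutely continuous on `[a,b]` and the
combined Caputo derivative exists and is continuous on `[a,b]`. -/
def memD (a b α β γ : ℝ) {N : ℕ} (y : ℝ → Fin N → ℝ) : Prop :=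
  (∀ i, AbsolutelyContinuousOn (fun t => y t i) a b) ∧
    ∀ i, ContinuousOn (fun x => combCaputo a b α β γ (fun t => y t i) x) (Icc a b)

/-- The norm `‖y‖_{1,∞} = max_{[a,b]} ‖y(x)‖ + max_{[a,b]} ‖ᶜD_γ^{α,β} y(x)‖`. -/
def norm1inf (a b α β γ : ℝ) {N : ℕ} (y : ℝ → Fin N → ℝ) : ℝ :=
  sSup ((fun x => ‖y x‖) '' Icc a b) +
    sSup ((fun x => ‖combCaputoVec a b α β γ y x‖) '' Icc a b)

/-- Partial derivative of a Lagrangian `L(x, y, v)` w.r.t. the `i`-th component of `y`. -/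
def pdY {N : ℕ} (L : ℝ → (Fin N → ℝ) → (Fin N → ℝ) → ℝ) (i : Fin N) (x : ℝ)
    (u v : Fin N → ℝ) : ℝ :=
  deriv (fun s => L x (Function.update u i s) v) (u i)

/-- Partial derivative of a Lagrangian `L(x, y, v)` w.r.t. the `i`-th component of `v`. -/
def pdV {N : ℕ} (L : ℝ → (Fin N → ℝ) → (Fin N → ℝ) → ℝ) (i : Fin N) (x : ℝ)
    (u v : Fin N → ℝ) : ℝ :=
  deriv (fun s => L x u (Function.update v i s)) (v i)

section Triangle

variable {E : Type*} [NormedAddCommGroup E] {a b : ℝ}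

/-- The triangle `{(x, t) : a < t < x ≤ b}` of Dirichlet's formula. -/
def lowerTriangle (a b : ℝ) : Set (ℝ × ℝ) :=
  {p | a < p.2 ∧ p.2 < p.1 ∧ p.1 ≤ b}

lemma lowerTriangle_subset_Ioc_prod_Ioc : lowerTriangle a b ⊆ Ioc a b ×ˢ Ioc a b :=
  fun _ ⟨ha, hlt, hb⟩ => ⟨⟨ha.trans hlt, hb⟩, ha, hlt.le.trans hb⟩

lemma measurableSet_lowerTriangle : MeasurableSet (lowerTriangle a b) :=
  (measurableSet_lt measurable_const measurable_snd).inter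
    ((measurableSet_lt measurable_snd measurable_fst).inter
      (measurableSet_le measurable_fst measurable_const))

variable [NormedSpace ℝ E]

lemma integral_indicator_lowerTriangle_snd (Φ : ℝ → ℝ → E) (x : ℝ) :
    ∫ t, (lowerTriangle a b).indicator (Function.uncurry Φ) (x, t) =
      (Ioc a b).indicator (fun x => ∫ t in a..x, Φ x t) x := by
  by_cases hx : x ∈ Ioc a b
  · have hslice : (fun t => (lowerTriangle a b).indicator (Function.uncurry Φ) (x, t)) =
        (Ioo a x).indicator (Φ x) := by
      ext t
      simp [indicator, lowerTriangle, hx.2]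
    rw [hslice, integral_indicator measurableSet_Ioo, indicator_of_mem hx,
      intervalIntegral.integral_of_le hx.1.le, integral_Ioc_eq_integral_Ioo]
  · have hslice : ∀ t, (x, t) ∉ lowerTriangle a b :=
      fun t ht => hx (lowerTriangle_subset_Ioc_prod_Ioc ht).1
    simp [hslice, hx]

lemma integral_indicator_lowerTriangle_fst (Φ : ℝ → ℝ → E) (t : ℝ) :
    ∫ x, (lowerTriangle a b).indicator (Function.uncurry Φ) (x, t) =
      (Ioc a b).indicator (fun t => ∫ x in t..b, Φ x t) t := by
  by_cases ht : t ∈ Ioc a b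
  · have hslice : (fun x => (lowerTriangle a b).indicator (Function.uncurry Φ) (x, t)) =
        (Ioc t b).indicator (fun x => Φ x t) := by
      ext x
      simp [indicator, lowerTriangle, ht.1]
    rw [hslice, integral_indicator measurableSet_Ioc, indicator_of_mem ht,
      intervalIntegral.integral_of_le ht.2]
  · have hslice : ∀ x, (x, t) ∉ lowerTriangle a b :=
      fun x hx => ht (lowerTriangle_subset_Ioc_prod_Ioc hx).2
    simp [hslice, ht]

lemma intervalIntegrable_integral_of_integrableOn_lowerTriangle (hab : a ≤ b) {Φ : ℝ → ℝ → E}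
    (hΦ : IntegrableOn (Function.uncurry Φ) (lowerTriangle a b)) :
    IntervalIntegrable (fun x => ∫ t in a..x, Φ x t) volume a b := by
  have hslice := ((integrable_indicator_iff measurableSet_lowerTriangle).2 hΦ).integral_prod_left
  simp only [integral_indicator_lowerTriangle_snd] at hslice
  rwa [intervalIntegrable_iff_integrableOn_Ioc_of_le hab,
    ← integrable_indicator_iff measurableSet_Ioc]

theorem integral_integral_lowerTriangle_swap (hab : a ≤ b) {Φ : ℝ → ℝ → E}
    (hΦ : IntegrableOn (Function.uncurry Φ) (lowerTriangle a b)) :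
    ∫ x in a..b, ∫ t in a..x, Φ x t = ∫ t in a..b, ∫ x in t..b, Φ x t := by
  have hswap := integral_integral_swap
    (f := fun x t => (lowerTriangle a b).indicator (Function.uncurry Φ) (x, t))
    ((integrable_indicator_iff measurableSet_lowerTriangle).2 hΦ)
  simpa only [integral_indicator_lowerTriangle_snd, integral_indicator_lowerTriangle_fst,
    integral_indicator measurableSet_Ioc, ← intervalIntegral.integral_of_le hab] using hswap

end Triangle

section Volterra

variable {a b : ℝ} {k u g : ℝ → ℝ}

/-- The Volterra convolution of a kernel `k` with `u`, based at `a`. The left Riemann–Liouville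
integral of order `β` is `1 / Γ(β)` times the case `k s = s ^ (β - 1)`. -/
def volterra (k : ℝ → ℝ) (a : ℝ) (u : ℝ → ℝ) (x : ℝ) : ℝ :=
  ∫ t in a..x, k (x - t) * u t

lemma integrableOn_lowerTriangle_sub_mul_snd (hk : IntegrableOn k (Ioc 0 (b - a)))
    (hu : IntegrableOn u (Ioc a b)) :
    IntegrableOn (fun p : ℝ × ℝ => k (p.1 - p.2) * u p.2) (lowerTriangle a b) := by
  have hconv := (hu.integrable_indicator measurableSet_Ioc).convolution_integrand
    (ContinuousLinearMap.mul ℝ ℝ) (hk.integrable_indicator measurableSet_Ioc)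
  refine hconv.integrableOn.congr_fun (fun p hp => ?_) measurableSet_lowerTriangle
  have hdiff : p.1 - p.2 ∈ Ioc 0 (b - a) := ⟨sub_pos.2 hp.2.1, by linarith [hp.1, hp.2.2]⟩
  simp [hdiff, (lowerTriangle_subset_Ioc_prod_Ioc hp).2, mul_comm]

lemma integrableOn_lowerTriangle_sub_mul_fst (hk : IntegrableOn k (Ioc 0 (b - a)))
    (hu : IntegrableOn u (Ioc a b)) :
    IntegrableOn (fun p : ℝ × ℝ => k (p.1 - p.2) * u p.1) (lowerTriangle a b) := by
  have hconv := ((hu.integrable_indicator measurableSet_Ioc).convolution_integrand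
    (ContinuousLinearMap.mul ℝ ℝ) (hk.integrable_indicator measurableSet_Ioc).comp_neg).swap
  refine hconv.integrableOn.congr_fun (fun p hp => ?_) measurableSet_lowerTriangle
  have hdiff : p.1 - p.2 ∈ Ioc 0 (b - a) := ⟨sub_pos.2 hp.2.1, by linarith [hp.1, hp.2.2]⟩
  simp [hdiff, (lowerTriangle_subset_Ioc_prod_Ioc hp).1, mul_comm]

lemma intervalIntegrable_volterra (hab : a ≤ b) (hk : IntervalIntegrable k volume 0 (b - a))
    (hu : IntervalIntegrable u volume a b) :
    IntervalIntegrable (volterra k a u) volume a b :=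
  intervalIntegrable_integral_of_integrableOn_lowerTriangle hab
    (integrableOn_lowerTriangle_sub_mul_snd hk.1 hu.1)

theorem integral_volterra_mul (hab : a ≤ b) (hk : IntervalIntegrable k volume 0 (b - a))
    (hg : MemLp g ⊤ (volume.restrict (Ioc a b))) (hu : IntervalIntegrable u volume a b) :
    ∫ x in a..b, volterra k a g x * u x =
      ∫ t in a..b, g t * ∫ x in t..b, k (x - t) * u x := by
  have hg_snd : MemLp (fun p : ℝ × ℝ => g p.2) ⊤ (volume.restrict (lowerTriangle a b)) := by
    refine (hg.comp_snd (volume.restrict (Ioc a b))).mono_measure ?_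
    rw [Measure.prod_restrict]
    exact Measure.restrict_mono_set _ lowerTriangle_subset_Ioc_prod_Ioc
  have hint : IntegrableOn (Function.uncurry fun x t => k (x - t) * g t * u x)
      (lowerTriangle a b) :=
    ((integrableOn_lowerTriangle_sub_mul_fst hk.1 hu.1).mul_of_top_left hg_snd).congr
      (.of_forall fun _ => mul_right_comm _ _ _)
  calc ∫ x in a..b, volterra k a g x * u x
      = ∫ x in a..b, ∫ t in a..x, k (x - t) * g t * u x := by
        simp only [volterra, intervalIntegral.integral_mul_const]
    _ = ∫ t in a..b, ∫ x in t..b, g t * (k (x - t) * u x) := by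
        rw [integral_integral_lowerTriangle_swap hab hint]
        simp only [mul_assoc, mul_left_comm (g _)]
    _ = ∫ t in a..b, g t * ∫ x in t..b, k (x - t) * u x := by
        simp only [intervalIntegral.integral_const_mul]

lemma integral_volterra (hab : a ≤ b) (hk : IntervalIntegrable k volume 0 (b - a))
    (hu : IntervalIntegrable u volume a b) :
    ∫ x in a..b, volterra k a u x = ∫ t in a..b, (∫ s in 0..b - t, k s) * u t := by
  unfold volterra
  rw [integral_integral_lowerTriangle_swap (Φ := fun x t => k (x - t) * u t) hab
    (integrableOn_lowerTriangle_sub_mul_snd hk.1 hu.1)]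
  simp only [intervalIntegral.integral_mul_const, intervalIntegral.integral_comp_sub_right,
    sub_self]

lemma volterra_integral (hab : a ≤ b) (hk : IntervalIntegrable k volume 0 (b - a))
    (hu : IntervalIntegrable u volume a b) :
    volterra k a (fun x => ∫ t in a..x, u t) b = ∫ t in a..b, (∫ s in 0..b - t, k s) * u t := by
  have hk' : IntervalIntegrable (fun x => k (b - x)) volume a b := by
    simpa using (hk.comp_sub_left b).symm
  have hint : IntegrableOn (Function.uncurry fun x t => k (b - x) * u t) (lowerTriangle a b) := by
    refine IntegrableOn.mono_set ?_ lowerTriangle_subset_Ioc_prod_Ioc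
    rw [IntegrableOn, Measure.volume_eq_prod, ← Measure.prod_restrict]
    exact hk'.1.mul_prod hu.1
  simp only [volterra, ← intervalIntegral.integral_const_mul]
  rw [integral_integral_lowerTriangle_swap hab hint]
  simp only [intervalIntegral.integral_mul_const, intervalIntegral.integral_comp_sub_left,
    sub_self]

end Volterra

section AbsoluteContinuity

variable {a b c : ℝ} {f g k v : ℝ → ℝ}

lemma absolutelyContinuousOnInterval_congr {X : Type*} [PseudoMetricSpace X] {φ ψ : ℝ → X}
    (h : EqOn φ ψ (uIcc a b)) (hφ : AbsolutelyContinuousOnInterval φ a b) :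
    AbsolutelyContinuousOnInterval ψ a b := by
  refine Filter.Tendsto.congr' ?_ hφ
  filter_upwards [Filter.mem_inf_of_right (Filter.mem_principal_self _)] with E hE
  exact Finset.sum_congr rfl fun i hi => by rw [h (hE.1 i hi).1, h (hE.1 i hi).2]

lemma memLp_top_of_absolutelyContinuousOnInterval {E : Type*} [NormedAddCommGroup E]
    {μ : Measure ℝ} {φ : ℝ → E} (hφ : AbsolutelyContinuousOnInterval φ a b) :
    MemLp φ ⊤ (μ.restrict (uIoc a b)) := by
  obtain ⟨C, hC⟩ := hφ.exists_bound
  exact memLp_top_of_bound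
    ((hφ.continuousOn.mono uIoc_subset_uIcc).aestronglyMeasurable measurableSet_uIoc) C
    (ae_restrict_of_forall_mem measurableSet_uIoc fun x hx => hC x (uIoc_subset_uIcc hx))

lemma absolutelyContinuousOnInterval_of_eqOn_add_integral (hv : IntervalIntegrable v volume a b)
    (hf : EqOn f (fun x => c + ∫ t in a..x, v t) (uIcc a b)) :
    AbsolutelyContinuousOnInterval f a b :=
  absolutelyContinuousOnInterval_congr hf.symm
    ((LipschitzWith.const c).lipschitzOnWith.absolutelyContinuousOnInterval.add
      (hv.absolutelyContinuousOnInterval_intervalIntegral left_mem_uIcc))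

lemma AbsolutelyContinuousOn.absolutelyContinuousOnInterval (hab : a ≤ b)
    (hf : AbsolutelyContinuousOn f a b) : AbsolutelyContinuousOnInterval f a b :=
  absolutelyContinuousOnInterval_of_eqOn_add_integral hf.1 (by rw [uIcc_of_le hab]; exact hf.2)

lemma volterra_eq_integral_add_volterra_deriv (hab : a ≤ b)
    (hk : IntervalIntegrable k volume 0 (b - a)) (hg : AbsolutelyContinuousOnInterval g a b) :
    volterra k a g b = ∫ x in a..b, (k (x - a) * g a + volterra k a (deriv g) x) := by
  have hg' := hg.intervalIntegrable_deriv
  have hk_left : IntervalIntegrable (fun t => k (b - t)) volume a b := by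
    simpa using (hk.comp_sub_left b).symm
  have hk_right : IntervalIntegrable (fun t => k (t - a)) volume a b := by
    simpa using hk.comp_sub_right a
  have hprimitive : ContinuousOn (fun x => ∫ t in a..x, deriv g t) (uIcc a b) :=
    intervalIntegral.continuousOn_primitive_interval' hg' left_mem_uIcc
  calc volterra k a g b
      = ∫ x in a..b, (k (b - x) * g a + k (b - x) * ∫ t in a..x, deriv g t) := by
        refine intervalIntegral.integral_congr fun x hx => ?_
        have hFTC := (hg.mono (uIcc_subset_uIcc_left hx)).integral_deriv_eq_sub
        simp only [hFTC]
        ring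
    _ = (∫ x in a..b, k (b - x)) * g a + volterra k a (fun x => ∫ t in a..x, deriv g t) b := by
        rw [intervalIntegral.integral_add (hk_left.mul_const _)
          (hk_left.mul_continuousOn hprimitive), intervalIntegral.integral_mul_const, volterra]
    _ = (∫ x in a..b, k (x - a)) * g a + ∫ x in a..b, volterra k a (deriv g) x := by
        rw [volterra_integral hab hk hg', integral_volterra hab hk hg']
        simp
    _ = ∫ x in a..b, (k (x - a) * g a + volterra k a (deriv g) x) := by
        rw [intervalIntegral.integral_add (hk_right.mul_const _)
          (intervalIntegrable_volterra hab hk hg'), intervalIntegral.integral_mul_const]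

theorem absolutelyContinuousOnInterval_volterra (hab : a ≤ b)
    (hk : IntervalIntegrable k volume 0 (b - a)) (hg : AbsolutelyContinuousOnInterval g a b) :
    AbsolutelyContinuousOnInterval (volterra k a g) a b := by
  have hk_right : IntervalIntegrable (fun t => k (t - a)) volume a b := by
    simpa using hk.comp_sub_right a
  refine absolutelyContinuousOnInterval_of_eqOn_add_integral (c := 0)
    ((hk_right.mul_const (g a)).add
      (intervalIntegrable_volterra hab hk hg.intervalIntegrable_deriv)) fun x hx => ?_
  have hx' : x ∈ Icc a b := uIcc_of_le hab ▸ hx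
  simp only [zero_add]
  refine volterra_eq_integral_add_volterra_deriv hx'.1 (hk.mono_set ?_)
    (hg.mono (uIcc_subset_uIcc_left hx))
  rw [uIcc_of_le (sub_nonneg.2 hx'.1), uIcc_of_le (sub_nonneg.2 hab)]
  exact Icc_subset_Icc_right (sub_le_sub_right hx'.2 a)

end AbsoluteContinuity

section RiemannLiouville

variable {a b β : ℝ} {g u : ℝ → ℝ}

lemma leftRLI_eq_volterra (a β : ℝ) (g : ℝ → ℝ) :
    leftRLI a β g = fun x => 1 / Gamma β * volterra (· ^ (β - 1)) a g x :=
  rfl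

lemma caputoRight_eq_neg_rightRLI_deriv (b α : ℝ) (f : ℝ → ℝ) :
    caputoRight b α f = fun x => -rightRLI b (1 - α) (deriv f) x := by
  ext x
  rw [caputoRight, rightRLI, sub_sub_cancel_left, neg_mul]

lemma absolutelyContinuousOnInterval_leftRLI (hab : a ≤ b) (hβ : 0 < β)
    (hg : AbsolutelyContinuousOnInterval g a b) :
    AbsolutelyContinuousOnInterval (leftRLI a β g) a b :=
  (absolutelyContinuousOnInterval_volterra hab
    (intervalIntegral.intervalIntegrable_rpow' (by linarith)) hg).const_mul _

theorem integral_mul_rightRLI (hab : a ≤ b) (hβ : 0 < β)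
    (hg : MemLp g ⊤ (volume.restrict (Ioc a b))) (hu : IntervalIntegrable u volume a b) :
    ∫ x in a..b, g x * rightRLI b β u x = ∫ x in a..b, leftRLI a β g x * u x := by
  have hduality := integral_volterra_mul hab
    (intervalIntegral.intervalIntegrable_rpow' (r := β - 1) (by linarith)) hg hu
  simp only [leftRLI_eq_volterra, rightRLI, mul_left_comm _ (1 / Gamma β), mul_assoc,
    intervalIntegral.integral_const_mul, hduality]

end RiemannLiouville

theorem caputo_right_integration_by_parts_general {a b α : ℝ} (hab : a ≤ b) (hα : α < 1)
    {f g : ℝ → ℝ} (hf : AbsolutelyContinuousOnInterval f a b)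
    (hg : MemLp g ⊤ (volume.restrict (Ioc a b)))
    (hIg : AbsolutelyContinuousOnInterval (leftRLI a (1 - α) g) a b) :
    ∫ x in a..b, g x * caputoRight b α f x =
      -(f b * leftRLI a (1 - α) g b - f a * leftRLI a (1 - α) g a) +
        ∫ x in a..b, f x * rlLeftD a α g x := by
  have hparts := hf.integral_mul_deriv_eq_deriv_mul hIg
  calc ∫ x in a..b, g x * caputoRight b α f x
      = -∫ x in a..b, g x * rightRLI b (1 - α) (deriv f) x := by
        simp only [caputoRight_eq_neg_rightRLI_deriv, mul_neg, intervalIntegral.integral_neg]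
    _ = -∫ x in a..b, deriv f x * leftRLI a (1 - α) g x := by
        simp only [integral_mul_rightRLI hab (sub_pos.2 hα) hg hf.intervalIntegrable_deriv,
          mul_comm]
    _ = _ := by
        simp only [rlLeftD, hparts]
        ring

/-- Fractional integration by parts for the right Caputo derivative:
`∫_a^b g (ᶜₓD_b^α f) dx = -[f · ₐIₓ^{1-α} g]_a^b + ∫_a^b f (ₐDₓ^α g) dx`. -/
theorem caputo_right_integration_by_parts
    (a b α : ℝ) (hab : a < b) (hα0 : 0 < α) (hα1 : α < 1)
    (f g : ℝ → ℝ)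
    (hf : AbsolutelyContinuousOn f a b) (hg : AbsolutelyContinuousOn g a b) :
    ∫ x in a..b, g x * caputoRight b α f x =
      -(f b * leftRLI a (1 - α) g b - f a * leftRLI a (1 - α) g a) +
        ∫ x in a..b, f x * rlLeftD a α g x := by
  have hg' := hg.absolutelyContinuousOnInterval hab.le
  exact caputo_right_integration_by_parts_general hab.le hα1
    (hf.absolutelyContinuousOnInterval hab.le)
    (uIoc_of_le hab.le ▸ memLp_top_of_absolutelyContinuousOnInterval hg')
    (absolutelyContinuousOnInterval_leftRLI hab.le (sub_pos.2 hα1) hg')
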